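/- For every n ≥ 1, the number of spanning trees of the complete graph K_n equals n^{n−2} (with the convention that for n = 1 and n = 2 this number is 1). -/

import Mathlib

/-!
Root a tree at a vertex `r`: sending every other vertex to its neighbour nearer to `r` identifies
trees with the parent maps along which every vertex eventually reaches `r`. Expanding the Laplacian
determinant with the row and column of `r` removed, multilinearly in its rows, produces one term for
each parent map. That term is the determinant of a reduced incidence matrix, which is unitriangular
when every vertex reaches `r`, and is otherwise singular because it kills the indicator vector of
the vertices that do not; this is the weighted directed matrix-tree theorem. For the complete graph
on `m + 1` vertices the reduced Laplacian is `(m + 1) • 1 - J` with `J` the all-ones matrix of rank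
one.
-/

theorem exists_adj_dist_lt {V : Type*} {G : SimpleGraph V} (hG : G.Connected) {u v : V}
    (huv : u ≠ v) : ∃ w, G.Adj u w ∧ G.dist w v < G.dist u v := by
  obtain ⟨p, hp⟩ := hG.exists_walk_length_eq_dist u v
  cases p with
  | nil => exact (huv rfl).elim
  | cons hadj q =>
    rw [SimpleGraph.Walk.length_cons] at hp
    exact ⟨_, hadj, by have := SimpleGraph.dist_le q; omega⟩

/-- A choice of a parent for every non-root vertex of the vertex set `Option α`, whose root
is `none`. -/
abbrev ParentMap (α : Type*) := α → Option α

namespace ParentMap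

variable {α : Type*}

/-- A parent map is acyclic when iterated parents of any vertex end at the root. This is encoded as
well-foundedness of the relation "is a non-root parent of". -/
def Acyclic (f : ParentMap α) : Prop :=
  WellFounded fun b a => f a = some b

/-- The graph of a parent map, in which every non-root vertex is joined to its parent. -/
def graph (f : ParentMap α) : SimpleGraph (Option α) :=
  SimpleGraph.fromEdgeSet (Set.range fun a => s(some a, f a))

variable {f g : ParentMap α}

theorem Acyclic.apply_ne_some_self (hf : f.Acyclic) (a : α) : f a ≠ some a :=
  hf.irrefl.irrefl a

theorem Acyclic.graph_adj (hf : f.Acyclic) (a : α) : f.graph.Adj (some a) (f a) :=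
  (SimpleGraph.fromEdgeSet_adj _).2 ⟨⟨a, rfl⟩, (hf.apply_ne_some_self a).symm⟩

theorem eq_or_eq_of_graph_adj {a : α} {x : Option α} (h : f.graph.Adj (some a) x) :
    f a = x ∨ ∃ b, x = some b ∧ f b = some a := by
  obtain ⟨⟨b, hb⟩, -⟩ := (SimpleGraph.fromEdgeSet_adj _).1 h
  rcases Sym2.eq_iff.1 hb with ⟨hba, hbx⟩ | ⟨hbx, hba⟩
  · exact Or.inl (Option.some_injective _ hba ▸ hbx)
  · exact Or.inr ⟨b, hbx.symm, hba⟩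

theorem graph_le_of_forall_adj {G : SimpleGraph (Option α)} (h : ∀ a, G.Adj (some a) (f a)) :
    f.graph ≤ G := by
  refine (SimpleGraph.fromEdgeSet_le G).2 ?_
  rintro _ ⟨⟨a, rfl⟩, -⟩
  exact h a

theorem Acyclic.graph_connected (hf : f.Acyclic) : f.graph.Connected := by
  have reachable_root (a : α) : f.graph.Reachable (some a) none := by
    induction a using hf.induction with
    | _ a ih =>
      refine (hf.graph_adj a).reachable.trans ?_
      cases hfa : f a with
      | none => rfl
      | some b => exact ih b hfa
  exact SimpleGraph.connected_iff_exists_forall_reachable _ |>.2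
    ⟨none, Option.rec .rfl fun a => (reachable_root a).symm⟩

theorem Acyclic.graph_isTree [Finite α] (hf : f.Acyclic) : f.graph.IsTree := by
  have edge_le : Nat.card f.graph.edgeSet ≤ Nat.card α := calc
    Nat.card f.graph.edgeSet ≤ Nat.card (Set.range fun a => s(some a, f a)) :=
      Nat.card_mono (Set.finite_range _)
        ((SimpleGraph.edgeSet_fromEdgeSet _).trans_subset Set.sdiff_subset)
    _ ≤ Nat.card α := Finite.card_range_le _
  refine SimpleGraph.isTree_iff_connected_and_card.2 ⟨hf.graph_connected, le_antisymm ?_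
    hf.graph_connected.card_vert_le_card_edgeSet_add_one⟩
  rw [Finite.card_option]
  exact Nat.add_le_add_right edge_le 1

theorem Acyclic.eq_of_graph_eq (hf : f.Acyclic) (hfg : f.graph = g.graph) : f = g := by
  funext a
  induction a using hf.induction with
  | _ a ih =>
    obtain h | ⟨b, hab, hba⟩ := eq_or_eq_of_graph_adj (hfg ▸ hf.graph_adj a)
    · exact h.symm
    · exact (hf.asymm.asymm _ _ hab ((ih b hab).trans hba)).elim

theorem exists_acyclic_graph_eq_of_isTree {T : SimpleGraph (Option α)} (hT : T.IsTree) :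
    ∃ f : ParentMap α, f.Acyclic ∧ f.graph = T := by
  choose f hadj hlt using fun a : α =>
    exists_adj_dist_lt hT.connected (Option.some_ne_none a)
  have hf : Acyclic f :=
    Subrelation.wf (fun {b a} hab => by simpa only [InvImage, hab] using hlt a)
      (InvImage.wf (fun a => T.dist (some a) none) wellFounded_lt)
  have hle : graph f ≤ T := graph_le_of_forall_adj hadj
  exact ⟨f, hf, hle.antisymm
    ((SimpleGraph.isTree_iff_minimal_connected.1 hT).2 hf.graph_connected hle)⟩

theorem card_isTree_eq_card_acyclic [Finite α] :
    Nat.card {T : SimpleGraph (Option α) // T.IsTree} =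
      Nat.card {f : ParentMap α // f.Acyclic} := by
  symm
  refine Nat.card_congr (.ofBijective (fun f => ⟨f.1.graph, f.2.graph_isTree⟩) ⟨?_, ?_⟩)
  · exact fun f g h => Subtype.ext (f.2.eq_of_graph_eq (congrArg Subtype.val h))
  · rintro ⟨T, hT⟩
    obtain ⟨f, hf, rfl⟩ := exists_acyclic_graph_eq_of_isTree hT
    exact ⟨⟨f, hf⟩, rfl⟩

end ParentMap

section MatrixTree

open Matrix

variable {α R : Type*} [CommRing R] [DecidableEq α]

variable (R) in
/-- The boundary vector of an edge directed from `a` to `y`, with the coordinate of the root `none`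
omitted. -/
def edgeVector (a : α) (y : Option α) : α → R :=
  Pi.single a 1 - y.elim 0 (Pi.single · 1)

variable (R) in
/-- The incidence matrix of a parent map, reduced by omitting the root: the row of `a` describes the
edge from `a` to its parent. -/
def ParentMap.incidenceMatrix (f : ParentMap α) : Matrix α α R :=
  of fun a => edgeVector R a (f a)

/-- The Laplacian of the directed graph on `Option α` with edge weights `w`, reduced by omitting the
row and column of the root `none`. Edges leaving the root play no role, so `w` records none. -/
def reducedLaplacian [Fintype α] (w : α → Option α → R) : Matrix α α R :=
  diagonal (fun a => ∑ y, w a y) - of fun a b => w a (some b)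

theorem edgeVector_dotProduct [Fintype α] (a : α) (y : Option α) (x : α → R) :
    edgeVector R a y ⬝ᵥ x = x a - y.elim 0 x := by
  cases y <;> simp [edgeVector, sub_dotProduct]

theorem ParentMap.incidenceMatrix_apply (f : ParentMap α) (a b : α) :
    f.incidenceMatrix R a b = (1 : Matrix α α R) a b - if f a = some b then 1 else 0 := by
  cases h : f a <;>
    simp [incidenceMatrix, edgeVector, h, Matrix.one_apply, Pi.single_apply, eq_comm]

theorem reducedLaplacian_row [Fintype α] (w : α → Option α → R) (a : α) :
    reducedLaplacian w a = ∑ y, w a y • edgeVector R a y := by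
  ext b
  simp [reducedLaplacian, edgeVector, diagonal_apply, Fintype.sum_option, Finset.sum_apply,
    Pi.single_apply, mul_sub, Finset.sum_sub_distrib, eq_comm]

variable [Fintype α]

theorem ParentMap.Acyclic.det_incidenceMatrix {f : ParentMap α} (hf : f.Acyclic) :
    (f.incidenceMatrix R).det = 1 := by
  have : IsWellFounded α fun b a => f a = some b := ⟨hf⟩
  let height (a : α) := OrderDual.toDual (IsWellFounded.rank (fun b a => f a = some b) a)
  have height_lt {a b : α} (h : f a = some b) : height a < height b :=
    IsWellFounded.rank_lt_of_rel (r := fun b a => f a = some b) h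
  have triangular : (f.incidenceMatrix R).BlockTriangular height := by
    intro a b hba
    have hne : a ≠ b := by rintro rfl; exact hba.false
    have hpar : f a ≠ some b := fun h => (height_lt h).not_gt hba
    simp [incidenceMatrix_apply, hne, hpar]
  rw [triangular.det]
  refine Finset.prod_eq_one fun k _ => ?_
  have block : (f.incidenceMatrix R).toSquareBlock height k = 1 := by
    ext ⟨a, ha⟩ ⟨b, hb⟩
    have hpar : f a ≠ some b := fun h => (height_lt h).ne (ha.trans hb.symm)
    simp [toSquareBlock_def, incidenceMatrix_apply, hpar, Matrix.one_apply]
  rw [block, det_one]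

theorem ParentMap.det_incidenceMatrix_of_not_acyclic {f : ParentMap α} (hf : ¬ f.Acyclic) :
    (f.incidenceMatrix R).det = 0 := by
  classical
  let IsRooted := Acc fun b a => f a = some b
  obtain ⟨a, ha⟩ : ∃ a, ¬ IsRooted a := not_forall.1 (mt WellFounded.intro hf)
  let x (a : α) : R := if IsRooted a then 0 else 1
  have hx (a : α) : x a = (f a).elim 0 x := by
    have isRooted_iff : IsRooted a ↔ ∀ b, f a = some b → IsRooted b := acc_def
    cases h : f a <;> simp [x, isRooted_iff, h]
  refine det_eq_zero_of_mulVec_eq_zero_of_mem_nonZeroDivisors (v := x) (i := a) ?_ ?_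
  · ext b
    exact (edgeVector_dotProduct b (f b) x).trans (sub_eq_zero.2 (hx b))
  · simp [x, ha]

theorem det_reducedLaplacian_eq_sum_det_incidenceMatrix (w : α → Option α → R) :
    (reducedLaplacian w).det = ∑ f : ParentMap α, (∏ a, w a (f a)) * (f.incidenceMatrix R).det :=
  calc (reducedLaplacian w).det
      = detRowAlternating fun a => ∑ y, w a y • edgeVector R a y :=
        congrArg det (funext (reducedLaplacian_row w))
    _ = ∑ f : ParentMap α, detRowAlternating fun a => w a (f a) • edgeVector R a (f a) :=
        detRowAlternating.toMultilinearMap.map_sum fun a y => w a y • edgeVector R a y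
    _ = ∑ f : ParentMap α, (∏ a, w a (f a)) * (f.incidenceMatrix R).det :=
        Finset.sum_congr rfl fun f _ => detRowAlternating.toMultilinearMap.map_smul_univ
          (fun a => w a (f a)) fun a => edgeVector R a (f a)

open scoped Classical in
theorem det_reducedLaplacian_eq_sum_acyclic (w : α → Option α → R) :
    (reducedLaplacian w).det = ∑ f : ParentMap α with f.Acyclic, ∏ a, w a (f a) := by
  rw [det_reducedLaplacian_eq_sum_det_incidenceMatrix, Finset.sum_filter]
  refine Finset.sum_congr rfl fun f _ => ?_
  split_ifs with hf
  · rw [hf.det_incidenceMatrix, mul_one]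
  · rw [ParentMap.det_incidenceMatrix_of_not_acyclic hf, mul_zero]

variable (α R) in
theorem det_reducedLaplacian_one :
    (reducedLaplacian (1 : α → Option α → R)).det =
      (Fintype.card α + 1 : R) ^ (Fintype.card α - 1) := by
  have scalar_sub : reducedLaplacian (1 : α → Option α → R) =
      scalar α (Fintype.card α + 1 : R) - vecMulVec 1 1 := by
    ext a b
    simp [reducedLaplacian, diagonal_apply]
  rw [scalar_sub, ← eval_charpoly, charpoly_vecMulVec]
  rcases h : Fintype.card α with _ | m
  · simp [h]
  · simp only [h, Nat.cast_add, Nat.cast_one, one_dotProduct_one, add_tsub_cancel_right,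
      Polynomial.eval_sub, Polynomial.eval_pow, Polynomial.eval_X, Polynomial.eval_smul,
      smul_eq_mul]
    ring

end MatrixTree

theorem ParentMap.card_acyclic (α : Type*) [Finite α] :
    Nat.card {f : ParentMap α // f.Acyclic} = (Nat.card α + 1) ^ (Nat.card α - 1) := by
  classical
  have := Fintype.ofFinite α
  have h := (det_reducedLaplacian_eq_sum_acyclic (1 : α → Option α → ℤ)).symm.trans
    (det_reducedLaplacian_one α ℤ)
  rw [Nat.card_eq_fintype_card, Nat.card_eq_fintype_card, Fintype.card_subtype]
  simp only [Pi.one_apply, Finset.prod_const_one, Finset.sum_const, nsmul_one] at h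
  exact_mod_cast h

theorem card_spanning_trees_complete_graph_general (V : Type*) [Finite V] [Nonempty V] :
    Nat.card {T : SimpleGraph V // T.IsTree} = Nat.card V ^ (Nat.card V - 2) := by
  classical
  obtain ⟨r⟩ := ‹Nonempty V›
  let e : Option {v // v ≠ r} ≃ V := Equiv.optionSubtypeNe r
  have card_V : Nat.card V = Nat.card {v // v ≠ r} + 1 :=
    (Nat.card_congr e).symm.trans Finite.card_option
  calc Nat.card {T : SimpleGraph V // T.IsTree}
      = Nat.card {T : SimpleGraph (Option {v // v ≠ r}) // T.IsTree} :=
        Nat.card_congr (e.symm.simpleGraph.subtypeEquiv fun T =>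
          (SimpleGraph.Iso.comap e T).symm.isTree_iff)
    _ = Nat.card {f : ParentMap {v // v ≠ r} // f.Acyclic} :=
        ParentMap.card_isTree_eq_card_acyclic
    _ = Nat.card V ^ (Nat.card V - 2) := by rw [ParentMap.card_acyclic, card_V]; rfl

/-- Cayley's formula: for every `n ≥ 1`, the number of spanning trees of the
complete graph `K_n` equals `n ^ (n − 2)` (for `n = 1, 2` this number is `1`, which agrees
with truncated subtraction on `ℕ`). -/
theorem card_spanning_trees_complete_graph (n : ℕ) (hn : 1 ≤ n) :
    Nat.card {T : SimpleGraph (Fin n) // T.IsTree} = n ^ (n - 2) := by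
  have : NeZero n := ⟨Nat.one_le_iff_ne_zero.1 hn⟩
  simpa only [Nat.card_fin] using card_spanning_trees_complete_graph_general (Fin n)
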